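/- Let P, Q ∈ ℤ[x] be coprime polynomials with r = max(deg P, deg Q) ≥ 1. Let x₁/y₁ and x₂/y₂ be rational numbers in lowest terms such that H(x₂,y₂) ≥ H(x₁,y₁) and P(x₁/y₁) + (x₂/y₂)·Q(x₁/y₁) = 0. Then H(x₂,y₂) ≥ H(x₁,y₁)^r / (C₁₅ · max(H(P), H(Q))^{2r² + 3r}), where C₁₅ = 2^{r²} · (r+1)^{(3r² + 2r)/2}. -/

import Mathlib

/-!
Write `p, q` for the forms of degree `r` obtained by homogenizing `P, Q`, evaluated at `(x₁, y₁)`.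
The vanishing hypothesis says `p * y₂ + x₂ * q = 0`; as `x₂, y₂` are coprime, `p = x₂ * k` and
`q = -y₂ * k` for an integer `k`, so `max |p| |q| = |k| * H(x₂, y₂)`.

The `2r` polynomials `X ^ j * Q`, `X ^ j * P` with `j < r` are linearly independent, since `P` and
`Q` are coprime and one of them has degree `r` (`sylvesterCol_independent`). Let `R ≠ 0` be the
determinant of their coefficient matrix, that is, the resultant of the two forms. Cramer's rule
(`exists_cramer_combination`) writes `R * X ^ l`, for each `l < 2r`, as a combination of them whose
coefficients are minors, hence at most `N = (2r)! * M ^ (2r)` in absolute value, where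
`M = max (H(P), H(Q))`. Homogenizing, `R * x₁ ^ l * y₁ ^ (2r-1-l) = a * q + b * p` where
`|a|, |b| ≤ r * N * H(x₁, y₁) ^ (r-1)`. The cases `l = 0` and `l = 2r-1` give

* `k ∣ R`, because `x₁` and `y₁` are coprime, so `|k| ≤ |R|`;
* `|R| * H(x₁, y₁) ^ (2r-1) ≤ 2 * r * N * H(x₁, y₁) ^ (r-1) * |k| * H(x₂, y₂)`.

Together, `H(x₁, y₁) ^ r ≤ 2 * r * N * H(x₂, y₂)`, the resultant cancelling, and
`2 * r * N` is smaller than the constant claimed.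
-/

open Polynomial

/-- The height `H(P)` of an integer polynomial: the maximum of the absolute values of
its coefficients (as a natural number; `H(0) = 0`). -/
def polyHeight (P : Polynomial ℤ) : ℕ := P.support.sup fun i => (P.coeff i).natAbs

lemma natAbs_coeff_le_polyHeight (P : ℤ[X]) (i : ℕ) : (P.coeff i).natAbs ≤ polyHeight P := by
  by_cases h : i ∈ P.support
  · exact Finset.le_sup (f := fun i => (P.coeff i).natAbs) h
  · simp [notMem_support_iff.mp h]

/-! ### Cramer's rule for integer polynomials -/

/-- Cramer's rule for `n` linearly independent integer polynomials of degree less than `n`: a fixed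
nonzero multiple of every monomial `X ^ k` with `k < n` is a combination of them with small
coefficients. -/
lemma exists_cramer_combination {n : ℕ} (c : Fin n → ℤ[X]) (M : ℤ) (hM : 1 ≤ M)
    (hdeg : ∀ j i, n ≤ i → (c j).coeff i = 0) (hc : ∀ j i, |(c j).coeff i| ≤ M)
    (hind : ∀ v : Fin n → ℤ, ∑ j, C (v j) * c j = 0 → v = 0) :
    ∃ R : ℤ, R ≠ 0 ∧ ∀ k < n, ∃ v : Fin n → ℤ,
      (∀ j, |v j| ≤ (n.factorial : ℤ) * M ^ n) ∧ ∑ j, C (v j) * c j = C R * X ^ k := by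
  let S : Matrix (Fin n) (Fin n) ℤ := Matrix.of fun i j => (c j).coeff i
  have hcoeff : ∀ (v : Fin n → ℤ) (i : Fin n),
      (∑ j, C (v j) * c j).coeff i = (S.mulVec v) i := by
    intro v i
    simp [S, Matrix.mulVec, dotProduct, mul_comm]
  have hcoeff' : ∀ (v : Fin n → ℤ) (i : ℕ), n ≤ i → (∑ j, C (v j) * c j).coeff i = 0 := by
    intro v i hi
    simp [hdeg _ i hi]
  refine ⟨S.det, ?_, ?_⟩
  · intro h0
    obtain ⟨v, hv, hv0⟩ := Matrix.exists_mulVec_eq_zero_iff.mpr h0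
    apply hv
    apply hind
    ext i
    by_cases hi : i < n
    · have := hcoeff v ⟨i, hi⟩
      simp only [hv0] at this
      simpa using this
    · rw [hcoeff' v i (by lia)]; simp
  · intro k hk
    refine ⟨fun j => S.adjugate j ⟨k, hk⟩, ?_, ?_⟩
    · intro j
      change |S.adjugate j ⟨k, hk⟩| ≤ _
      rw [Matrix.adjugate_apply]
      have := Matrix.det_le (A := S.updateRow ⟨k, hk⟩ (Pi.single j 1))
        (abv := AbsoluteValue.abs) (x := M) ?_
      · simpa using this
      · intro a b
        rw [Matrix.updateRow_apply]
        split_ifs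
        · by_cases hb : b = j
          · subst hb; simpa using hM
          · simp only [Pi.single_apply, hb, if_false, AbsoluteValue.abs_apply, abs_zero]; lia
        · exact hc b a
    · ext i
      by_cases hi : i < n
      · have h1 := hcoeff (fun j => S.adjugate j ⟨k, hk⟩) ⟨i, hi⟩
        have h2 := congr_fun (congr_fun S.mul_adjugate ⟨i, hi⟩) ⟨k, hk⟩
        simp only at h1
        rw [h1]
        change (S * S.adjugate) ⟨i, hi⟩ ⟨k, hk⟩ = _
        rw [h2, coeff_C_mul_X_pow]
        simp [Matrix.one_apply]
      · rw [hcoeff' _ i (by lia), coeff_C_mul_X_pow, if_neg (by lia)]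

/-! ### Independence of the Sylvester columns -/

/-- The polynomials `X ^ j * Q` followed by `X ^ j * P`, for `j < r`: the columns of the Sylvester
matrix of `P` and `Q` viewed as forms of degree `r`. -/
noncomputable def sylvesterCol (P Q : ℤ[X]) (r : ℕ) : Fin (r + r) → ℤ[X] :=
  Fin.addCases (fun j : Fin r => Q * X ^ (j : ℕ)) (fun j : Fin r => P * X ^ (j : ℕ))

/-- The polynomial of degree less than `r` with coefficient vector `v`. -/
noncomputable def vecPoly {r : ℕ} (v : Fin r → ℤ) : ℤ[X] := ∑ j, C (v j) * X ^ (j : ℕ)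

lemma vecPoly_coeff {r : ℕ} (v : Fin r → ℤ) (j : Fin r) : (vecPoly v).coeff j = v j := by
  simp [vecPoly, coeff_X_pow, Fin.val_inj]

lemma vecPoly_coeff_of_le {r : ℕ} (v : Fin r → ℤ) (i : ℕ) (hi : r ≤ i) :
    (vecPoly v).coeff i = 0 := by
  rw [vecPoly, finsetSum_coeff]
  refine Finset.sum_eq_zero fun j _ => ?_
  rw [coeff_C_mul_X_pow, if_neg (by lia)]

lemma vecPoly_natDegree_lt {r : ℕ} (hr : 1 ≤ r) (v : Fin r → ℤ) : (vecPoly v).natDegree < r := by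
  have : (vecPoly v).natDegree ≤ r - 1 :=
    natDegree_le_iff_coeff_eq_zero.mpr fun i hi => vecPoly_coeff_of_le v i (by lia)
  lia

lemma vecPoly_eq_zero {r : ℕ} (v : Fin r → ℤ) (h : vecPoly v = 0) (j : Fin r) : v j = 0 := by
  rw [← vecPoly_coeff v j, h, coeff_zero]

lemma abs_vecPoly_coeff_le {r : ℕ} (v : Fin r → ℤ) (N : ℤ) (hN : 0 ≤ N) (h : ∀ j, |v j| ≤ N)
    (i : ℕ) : |(vecPoly v).coeff i| ≤ N := by
  by_cases hi : i < r
  · exact (vecPoly_coeff v ⟨i, hi⟩) ▸ h _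
  · rw [vecPoly_coeff_of_le v i (by lia)]; simpa using hN

lemma sum_sylvesterCol (P Q : ℤ[X]) (r : ℕ) (v : Fin (r + r) → ℤ) :
    ∑ j, C (v j) * sylvesterCol P Q r j =
      vecPoly (fun j => v (Fin.castAdd r j)) * Q + vecPoly (fun j => v (Fin.natAdd r j)) * P := by
  rw [Fin.sum_univ_add]
  simp only [sylvesterCol, Fin.addCases_left, Fin.addCases_right, vecPoly, Finset.sum_mul]
  congr 1 <;> exact Finset.sum_congr rfl fun j _ => by ring

/-- If `F` has degree exactly `r`, is coprime to `G`, and `a * G + b * F = 0` with `deg a < r`,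
then `F ∣ a`, so `a = b = 0`. -/
lemma eq_zero_of_combination {F G a b : ℤ[X]} {r : ℕ} (hF : F.natDegree = r) (hr : 1 ≤ r)
    (hFG : IsRelPrime F G) (ha : a.natDegree < r) (h : a * G + b * F = 0) : a = 0 ∧ b = 0 := by
  have hF0 : F ≠ 0 := by rintro rfl; simp at hF; lia
  have hdvd : F ∣ a * G := ⟨-b, by linear_combination h⟩
  have hFa : F ∣ a := hFG.dvd_of_dvd_mul_right hdvd
  have ha0 : a = 0 := by
    by_contra h0
    have := natDegree_le_of_dvd hFa h0
    lia
  subst ha0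
  simpa [hF0] using h

lemma sylvesterCol_independent (P Q : ℤ[X]) (hcop : IsRelPrime P Q) (r : ℕ)
    (hr : r = max P.natDegree Q.natDegree) (hr1 : 1 ≤ r) (v : Fin (r + r) → ℤ)
    (h : ∑ j, C (v j) * sylvesterCol P Q r j = 0) : v = 0 := by
  rw [sum_sylvesterCol] at h
  have key : vecPoly (fun j => v (Fin.castAdd r j)) = 0 ∧
      vecPoly (fun j => v (Fin.natAdd r j)) = 0 := by
    rcases le_total P.natDegree Q.natDegree with hle | hle
    · exact (eq_zero_of_combination (by lia : Q.natDegree = r) hr1 hcop.symm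
        (vecPoly_natDegree_lt hr1 _) (by rwa [add_comm] at h)).symm
    · exact eq_zero_of_combination (by lia : P.natDegree = r) hr1 hcop
        (vecPoly_natDegree_lt hr1 _) h
  funext j
  induction j using Fin.addCases with
  | left j => exact vecPoly_eq_zero _ key.1 j
  | right j => exact vecPoly_eq_zero _ key.2 j

/-! ### Homogenization -/

/-- The value at `(x, y)` of the form of degree `d` obtained by homogenizing `F`; meaningful when
`deg F ≤ d`. -/
noncomputable def homEval (d : ℕ) (F : ℤ[X]) (x y : ℤ) : ℤ :=
  ∑ i ∈ Finset.range (d + 1), F.coeff i * x ^ i * y ^ (d - i)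

lemma homEval_cast (d : ℕ) (F : ℤ[X]) (hF : F.natDegree ≤ d) (x y : ℤ) (hy : y ≠ 0) :
    (homEval d F x y : ℚ) = (y : ℚ) ^ d * aeval ((x : ℚ) / y) F := by
  have hy' : (y : ℚ) ≠ 0 := by exact_mod_cast hy
  rw [aeval_eq_sum_range' (Nat.lt_succ_of_le hF), homEval, Finset.mul_sum]
  push_cast
  refine Finset.sum_congr rfl fun i hi => ?_
  have hi' : i ≤ d := by simpa [Nat.lt_succ_iff] using hi
  obtain ⟨e, rfl⟩ := Nat.exists_eq_add_of_le hi'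
  rw [Nat.add_sub_cancel_left, zsmul_eq_mul, div_pow, pow_add]
  field_simp

lemma abs_homEval_le (d : ℕ) (F : ℤ[X]) (N x y : ℤ) (hN : ∀ i, |F.coeff i| ≤ N) :
    |homEval d F x y| ≤ (d + 1) * N * (max |x| |y|) ^ d := by
  have hN0 : 0 ≤ N := (abs_nonneg _).trans (hN 0)
  calc |homEval d F x y|
      ≤ ∑ i ∈ Finset.range (d + 1), |F.coeff i * x ^ i * y ^ (d - i)| :=
        Finset.abs_sum_le_sum_abs _ _
    _ ≤ ∑ i ∈ Finset.range (d + 1), N * (max |x| |y|) ^ d := by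
        refine Finset.sum_le_sum fun i hi => ?_
        have hi' : i ≤ d := by simpa [Nat.lt_succ_iff] using hi
        have hsplit : (max |x| |y|) ^ d = (max |x| |y|) ^ i * (max |x| |y|) ^ (d - i) := by
          rw [← pow_add, Nat.add_sub_cancel' hi']
        rw [abs_mul, abs_mul, abs_pow, abs_pow, hsplit, mul_assoc]
        gcongr
        · exact hN i
        · exact le_max_left _ _
        · exact le_max_right _ _
    _ = (d + 1) * N * (max |x| |y|) ^ d := by
        rw [Finset.sum_const, Finset.card_range, nsmul_eq_mul]; push_cast; ring

/-- The identity `R * X ^ l = a * Q + b * P` homogenized in degree `2d + 1`, where `a, b` have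
degree at most `d` and `P, Q` degree at most `d + 1`. -/
lemma homEval_combination {d l : ℕ} {P Q a b : ℤ[X]} {R : ℤ} (hP : P.natDegree ≤ d + 1)
    (hQ : Q.natDegree ≤ d + 1) (ha : a.natDegree ≤ d) (hb : b.natDegree ≤ d)
    (hl : l ≤ 2 * d + 1) (h : a * Q + b * P = C R * X ^ l) (x y : ℤ) (hy : y ≠ 0) :
    homEval d a x y * homEval (d + 1) Q x y + homEval d b x y * homEval (d + 1) P x y =
      R * x ^ l * y ^ (2 * d + 1 - l) := by
  have hy' : (y : ℚ) ≠ 0 := by exact_mod_cast hy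
  have h1 := congr_arg (fun F => (y : ℚ) ^ (2 * d + 1) * aeval ((x : ℚ) / y) F) h
  simp only [map_add, map_mul, aeval_C, aeval_X_pow] at h1
  have h2 : (y : ℚ) ^ (2 * d + 1) * ((x : ℚ) / y) ^ l = x ^ l * y ^ (2 * d + 1 - l) := by
    obtain ⟨e, he⟩ := Nat.exists_eq_add_of_le hl
    rw [he, Nat.add_sub_cancel_left, div_pow, pow_add]
    field_simp
  have : ((homEval d a x y * homEval (d + 1) Q x y + homEval d b x y * homEval (d + 1) P x y : ℤ)
      : ℚ) = ((R * x ^ l * y ^ (2 * d + 1 - l) : ℤ) : ℚ) := by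
    push_cast
    rw [homEval_cast _ _ hP _ _ hy, homEval_cast _ _ hQ _ _ hy, homEval_cast _ _ ha _ _ hy,
      homEval_cast _ _ hb _ _ hy, mul_assoc (R : ℚ), ← h2]
    simp only [algebraMap_int_eq, eq_intCast] at h1
    linear_combination h1
  exact_mod_cast this

/-! ### The estimate and its constant -/

lemma constant_bound (r : ℕ) (hr : 1 ≤ r) (M : ℝ) (hM : 1 ≤ M) :
    2 * (r : ℝ) * (((r + r).factorial : ℝ) * M ^ (r + r)) ≤
      (2 : ℝ) ^ (r ^ 2) * ((r : ℝ) + 1) ^ ((3 * (r : ℝ) ^ 2 + 2 * r) / 2) *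
          M ^ (2 * r ^ 2 + 3 * r) := by
  have hr' : (1 : ℝ) ≤ r := by exact_mod_cast hr
  have hpow : M ^ (r + r) ≤ M ^ (2 * r ^ 2 + 3 * r) := pow_le_pow_right₀ hM (by nlinarith)
  have hfac : ∃ e : ℕ, 2 * e ≤ 3 * r ^ 2 + 2 * r ∧
      (2 * r) * (r + r).factorial ≤ 2 ^ (r ^ 2) * (r + 1) ^ e := by
    rcases hr.eq_or_lt with rfl | h2
    · exact ⟨2, by norm_num, by decide⟩
    · refine ⟨2 * r + 1, by nlinarith, ?_⟩
      calc (2 * r) * (r + r).factorial ≤ (2 * r) * ((2 * r) ^ r * r ^ r) := by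
            rw [← two_mul]
            gcongr
            exact (Nat.factorial_two_mul_le r).trans (Nat.mul_le_mul_left _ r.factorial_le_pow)
        _ = 2 ^ (r + 1) * r ^ (2 * r + 1) := by rw [mul_pow]; ring
        _ ≤ 2 ^ (r ^ 2) * (r + 1) ^ (2 * r + 1) := by
            gcongr
            · norm_num
            · nlinarith
            · lia
  obtain ⟨e, he, hfac⟩ := hfac
  have hrpow : ((r : ℝ) + 1) ^ e ≤ ((r : ℝ) + 1) ^ ((3 * (r : ℝ) ^ 2 + 2 * r) / 2) := by
    rw [← Real.rpow_natCast]
    apply Real.rpow_le_rpow_of_exponent_le (by linarith)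
    have : (2 * e : ℝ) ≤ 3 * (r : ℝ) ^ 2 + 2 * r := by exact_mod_cast he
    linarith
  have hfac' : 2 * (r : ℝ) * ((r + r).factorial : ℝ) ≤ 2 ^ (r ^ 2) * ((r : ℝ) + 1) ^ e := by
    exact_mod_cast hfac
  calc 2 * (r : ℝ) * (((r + r).factorial : ℝ) * M ^ (r + r))
      = 2 * (r : ℝ) * ((r + r).factorial : ℝ) * M ^ (r + r) := by ring
    _ ≤ (2 ^ (r ^ 2) * ((r : ℝ) + 1) ^ e) * M ^ (2 * r ^ 2 + 3 * r) := by gcongr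
    _ ≤ _ := by gcongr

/-- The gap principle over `ℤ`, with the sharper constant that Cramer's rule gives. -/
lemma height_pow_le (P Q : ℤ[X]) (hcop : IsRelPrime P Q) (r : ℕ)
    (hr : r = max P.natDegree Q.natDegree) (hr1 : 1 ≤ r) (M : ℤ) (hM : 1 ≤ M)
    (hPM : ∀ i, |P.coeff i| ≤ M) (hQM : ∀ i, |Q.coeff i| ≤ M)
    (x₁ y₁ x₂ y₂ : ℤ) (hy₁ : 0 < y₁) (hy₂ : 0 < y₂)
    (hcop₁ : IsCoprime x₁ y₁) (hcop₂ : IsCoprime x₂ y₂)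
    (hvan : homEval r P x₁ y₁ * y₂ + x₂ * homEval r Q x₁ y₁ = 0) :
    (max |x₁| |y₁|) ^ r ≤
      2 * r * (((r + r).factorial : ℤ) * M ^ (r + r)) * max |x₂| |y₂| := by
  have hind := sylvesterCol_independent P Q hcop r hr hr1
  have hshift : ∀ (F : ℤ[X]), (∀ i, |F.coeff i| ≤ M) → ∀ i j, |(F * X ^ j).coeff i| ≤ M := by
    intro F hF i j
    rw [coeff_mul_X_pow']
    split_ifs
    · exact hF _
    · rw [abs_zero]; lia
  have hshift' : ∀ (F : ℤ[X]), F.natDegree ≤ r → ∀ i (j : Fin r), r + r ≤ i →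
      (F * X ^ (j : ℕ)).coeff i = 0 := by
    intro F hF i j hi
    rw [coeff_mul_X_pow', if_pos (by lia)]
    exact coeff_eq_zero_of_natDegree_lt (by lia)
  obtain ⟨R, hR, hcomb⟩ := exists_cramer_combination (sylvesterCol P Q r) M hM
    (by
      intro j i hi
      induction j using Fin.addCases with
      | left j => simpa only [sylvesterCol, Fin.addCases_left] using hshift' Q (by lia) i j hi
      | right j => simpa only [sylvesterCol, Fin.addCases_right] using hshift' P (by lia) i j hi)
    (by
      intro j i
      induction j using Fin.addCases with
      | left j => simpa only [sylvesterCol, Fin.addCases_left] using hshift Q hQM i j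
      | right j => simpa only [sylvesterCol, Fin.addCases_right] using hshift P hPM i j)
    hind
  have hPr : P.natDegree ≤ r := by lia
  have hQr : Q.natDegree ≤ r := by lia
  clear hind hshift hshift' hr
  obtain ⟨d, rfl⟩ : ∃ d, r = d + 1 := ⟨r - 1, by lia⟩
  set N : ℤ := ((d + 1 + (d + 1)).factorial : ℤ) * M ^ (d + 1 + (d + 1)) with hN
  have hN0 : 0 ≤ N := by positivity
  set H := max |x₁| |y₁| with hH
  have hHpos : 0 < H := lt_of_lt_of_le (abs_pos.mpr hy₁.ne') (le_max_right _ _)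
  have hforms : ∀ l ≤ 2 * d + 1, ∃ a b : ℤ, |a| ≤ (d + 1) * N * H ^ d ∧
      |b| ≤ (d + 1) * N * H ^ d ∧
      a * homEval (d + 1) Q x₁ y₁ + b * homEval (d + 1) P x₁ y₁ =
        R * x₁ ^ l * y₁ ^ (2 * d + 1 - l) := by
    intro l hl
    obtain ⟨v, hv, hsum⟩ := hcomb l (by lia)
    rw [sum_sylvesterCol] at hsum
    refine ⟨_, _, ?_, ?_, homEval_combination hPr hQr
      (Nat.lt_succ_iff.mp (vecPoly_natDegree_lt hr1 _))
      (Nat.lt_succ_iff.mp (vecPoly_natDegree_lt hr1 _)) hl hsum x₁ y₁ hy₁.ne'⟩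
    · exact abs_homEval_le _ _ _ _ _ (abs_vecPoly_coeff_le _ N hN0 fun j => hv _)
    · exact abs_homEval_le _ _ _ _ _ (abs_vecPoly_coeff_le _ N hN0 fun j => hv _)
  set p := homEval (d + 1) P x₁ y₁
  set q := homEval (d + 1) Q x₁ y₁
  obtain ⟨k, hq, hp⟩ : ∃ k, q = -(y₂ * k) ∧ p = x₂ * k := by
    have hdvd : y₂ ∣ q := hcop₂.symm.dvd_of_dvd_mul_left ⟨-p, by linear_combination hvan⟩
    obtain ⟨m, hm⟩ := hdvd
    refine ⟨-m, by rw [hm]; ring, ?_⟩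
    apply mul_right_cancel₀ hy₂.ne'
    rw [hm] at hvan
    linear_combination hvan
  obtain ⟨a, b, ha, hb, hab⟩ := hforms 0 (by lia)
  obtain ⟨a', b', ha', hb', hab'⟩ := hforms (2 * d + 1) le_rfl
  simp only [pow_zero, mul_one, Nat.sub_zero, Nat.sub_self] at hab hab'
  have hkR : k ∣ R := by
    have h1 : k ∣ R * y₁ ^ (2 * d + 1) := ⟨-a * y₂ + b * x₂, by rw [← hab, hq, hp]; ring⟩
    have h2 : k ∣ R * x₁ ^ (2 * d + 1) := ⟨-a' * y₂ + b' * x₂, by rw [← hab', hq, hp]; ring⟩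
    obtain ⟨u, w, huw⟩ := hcop₁.pow (m := 2 * d + 1) (n := 2 * d + 1)
    have : R = u * (R * x₁ ^ (2 * d + 1)) + w * (R * y₁ ^ (2 * d + 1)) := by
      linear_combination (-R) * huw
    rw [this]
    exact dvd_add (h2.mul_left _) (h1.mul_left _)
  have hkle : |k| ≤ |R| := Int.le_of_dvd (abs_pos.mpr hR) ((abs_dvd_abs k R).mpr hkR)
  set H₂ := max |x₂| |y₂| with hH₂
  have hH₂0 : 0 ≤ H₂ := (abs_nonneg _).trans (le_max_left _ _)
  have hpb : |p| ≤ |R| * H₂ := by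
    rw [hp, abs_mul, mul_comm]
    exact mul_le_mul hkle (le_max_left _ _) (abs_nonneg _) (abs_nonneg _)
  have hqb : |q| ≤ |R| * H₂ := by
    rw [hq, abs_neg, abs_mul, mul_comm]
    exact mul_le_mul hkle (le_max_right _ _) (abs_nonneg _) (abs_nonneg _)
  have hbound : ∀ a b : ℤ, |a| ≤ (d + 1) * N * H ^ d → |b| ≤ (d + 1) * N * H ^ d →
      |a * q + b * p| ≤ 2 * ((d + 1) * N * H ^ d) * (|R| * H₂) := by
    intro a b ha hb
    calc |a * q + b * p| ≤ |a| * |q| + |b| * |p| := by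
          rw [← abs_mul, ← abs_mul]; exact abs_add_le _ _
      _ ≤ (d + 1) * N * H ^ d * (|R| * H₂) + (d + 1) * N * H ^ d * (|R| * H₂) := by gcongr
      _ = _ := by ring
  have hmain : |R| * H ^ (2 * d + 1) ≤ 2 * ((d + 1) * N * H ^ d) * (|R| * H₂) := by
    have hx := hbound a' b' ha' hb'
    have hy := hbound a b ha hb
    rw [hab', abs_mul, abs_pow] at hx
    rw [hab, abs_mul, abs_pow] at hy
    rcases max_choice |x₁| |y₁| with h | h
    · rwa [← h] at hx
    · rwa [← h] at hy
  have hpos : 0 < |R| * H ^ d := mul_pos (abs_pos.mpr hR) (pow_pos hHpos _)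
  refine le_of_mul_le_mul_left ?_ hpos
  calc |R| * H ^ d * H ^ (d + 1) = |R| * H ^ (2 * d + 1) := by ring
    _ ≤ _ := hmain
    _ = _ := by push_cast; ring

/-- **A gap principle in the presence of vanishing.** Let `P, Q ∈ ℤ[x]` be coprime
with `r = max (deg P, deg Q) ≥ 1`. Let `x₁/y₁` and `x₂/y₂` be rational numbers in
lowest terms such that `H(x₂,y₂) ≥ H(x₁,y₁)` and `P(x₁/y₁) + (x₂/y₂)·Q(x₁/y₁) = 0`.
Then `H(x₂,y₂) ≥ H(x₁,y₁)^r / (C₁₅ · max (H(P), H(Q))^(2r² + 3r))`, where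
`C₁₅ = 2^(r²) · (r+1)^((3r² + 2r)/2)`. -/
theorem gap_principle_with_vanishing
    (P Q : Polynomial ℤ)
    (hcop : ∀ g : Polynomial ℤ, g ∣ P → g ∣ Q → IsUnit g)
    (r : ℕ) (hr : r = max P.natDegree Q.natDegree) (hr1 : 1 ≤ r)
    (x₁ y₁ x₂ y₂ : ℤ) (hy₁ : 0 < y₁) (hy₂ : 0 < y₂)
    (hcop₁ : IsCoprime x₁ y₁) (hcop₂ : IsCoprime x₂ y₂)
    (hH : max |(x₁ : ℝ)| |(y₁ : ℝ)| ≤ max |(x₂ : ℝ)| |(y₂ : ℝ)|)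
    (hvanish : Polynomial.aeval ((x₁ : ℚ) / (y₁ : ℚ)) P +
      ((x₂ : ℚ) / (y₂ : ℚ)) * Polynomial.aeval ((x₁ : ℚ) / (y₁ : ℚ)) Q = 0) :
    (max |(x₁ : ℝ)| |(y₁ : ℝ)|) ^ r /
        ((2 : ℝ) ^ (r ^ 2) * ((r : ℝ) + 1) ^ ((3 * (r : ℝ) ^ 2 + 2 * r) / 2) *
          (max (polyHeight P) (polyHeight Q) : ℝ) ^ (2 * r ^ 2 + 3 * r)) ≤
      max |(x₂ : ℝ)| |(y₂ : ℝ)| := by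
  have hy₂' : (y₂ : ℚ) ≠ 0 := by exact_mod_cast hy₂.ne'
  have hvan : homEval r P x₁ y₁ * y₂ + x₂ * homEval r Q x₁ y₁ = 0 := by
    have : ((homEval r P x₁ y₁ * y₂ + x₂ * homEval r Q x₁ y₁ : ℤ) : ℚ) = 0 := by
      push_cast
      rw [homEval_cast _ _ (by lia) _ _ hy₁.ne', homEval_cast _ _ (by lia) _ _ hy₁.ne']
      have h1 : (x₂ : ℚ) = x₂ / y₂ * y₂ := by field_simp
      rw [h1]
      linear_combination ((y₁ : ℚ) ^ r * y₂) * hvanish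
    exact_mod_cast this
  set M : ℕ := max (polyHeight P) (polyHeight Q) with hMdef
  have hPM : ∀ i, |P.coeff i| ≤ (M : ℤ) := fun i => by
    have := natAbs_coeff_le_polyHeight P i
    rw [Int.abs_eq_natAbs]; lia
  have hQM : ∀ i, |Q.coeff i| ≤ (M : ℤ) := fun i => by
    have := natAbs_coeff_le_polyHeight Q i
    rw [Int.abs_eq_natAbs]; lia
  have hM1 : 1 ≤ M := by
    by_contra h0
    have hM0 : M = 0 := by lia
    have hP0 : P = 0 := by
      ext i
      have := hPM i
      simpa [hM0] using this
    have hQ0 : Q = 0 := by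
      ext i
      have := hQM i
      simpa [hM0] using this
    subst hP0 hQ0
    simp at hr
    lia
  have hrel : IsRelPrime P Q := fun g hP hQ => hcop g hP hQ
  have key := height_pow_le P Q hrel r hr hr1 M (by exact_mod_cast hM1) hPM hQM x₁ y₁ x₂ y₂ hy₁ hy₂
    hcop₁ hcop₂ hvan
  have keyR : (max |(x₁ : ℝ)| |(y₁ : ℝ)|) ^ r ≤
      2 * r * (((r + r).factorial : ℝ) * (M : ℝ) ^ (r + r)) * max |(x₂ : ℝ)| |(y₂ : ℝ)| := by
    exact_mod_cast key
  have hMR : (1 : ℝ) ≤ M := by exact_mod_cast hM1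
  have hcast : (max (polyHeight P) (polyHeight Q) : ℝ) = (M : ℝ) := by
    rw [hMdef]; push_cast; rfl
  rw [hcast, div_le_iff₀ (by positivity)]
  refine keyR.trans ?_
  rw [mul_comm (max |(x₂ : ℝ)| |(y₂ : ℝ)|)]
  exact mul_le_mul_of_nonneg_right (constant_bound r hr1 M hMR) (by positivity)
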